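/- Let k be a positive integer with 4 ∣ k and set k̄ = k+2. Then the number of triples (v,z,n) of integers with 1 ≤ v ≤ k̄/2, 2v ∣ k̄, k̄ ∣ 2v², 1 ≤ z ≤ 8v²/k̄, (4v²/k̄) ∣ (z²−1), and n ∈ {0,1}, equals 2·d(k̄), where d(m) denotes the number of positive divisors of m. (Note that 4v²/k̄ ∈ ℤ follows from k̄ ∣ 2v².) -/

import Mathlib

/-!
Put `k + 2 = 2m` with `m` odd. The conditions on `v` say that `v ∣ m` and `m ∣ v²`, and with
`N = v² / m` (odd) those on `z` become `z ≤ 4N` and `2N ∣ z² - 1`. Writing `z = 2x + 1` turns the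
latter into `N ∣ x (x + 1)`, and since `x` and `x + 1` are coprime, the solutions `x` modulo `N`
correspond to the factorizations `N = ab` into coprime factors. On the other hand, a factorization
`m = cd` with `lcm c d = v` is `m = (ea)(eb)` with `e = gcd c d = m / v` and `N = ab` coprime.
Summing over `v` therefore counts each factorization of `m` once. Each residue class of `x` has two
representatives in the range and `n` takes two values, so the total is `4 d(m) = 2 d(2m)`.
-/

open Finset

/-- The ordered pairs `(a, b)` of coprime natural numbers with `a * b = N`, i.e. the unitary
divisors `a` of `N` together with their cofactors; empty for `N = 0`. They parametrize the
solutions of `x (x + 1) ≡ 0` modulo `N`. -/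
def coprimeFactorizations (N : ℕ) : Finset (ℕ × ℕ) :=
  {p ∈ N.divisorsAntidiagonal | p.1.Coprime p.2}

theorem mem_coprimeFactorizations {N : ℕ} {p : ℕ × ℕ} :
    p ∈ coprimeFactorizations N ↔ (p.1 * p.2 = N ∧ N ≠ 0) ∧ p.1.Coprime p.2 := by
  simp only [coprimeFactorizations, mem_filter, Nat.mem_divisorsAntidiagonal]

theorem card_filter_gcd_eq_divisorsAntidiagonal {e : ℕ} (he : e ≠ 0) (N : ℕ) :
    #{p ∈ (e * e * N).divisorsAntidiagonal | p.1.gcd p.2 = e} = #(coprimeFactorizations N) := by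
  symm
  refine card_nbij (fun p ↦ (e * p.1, e * p.2)) ?_ ?_ ?_
  · rintro ⟨a, b⟩ hab
    obtain ⟨⟨rfl, hN⟩, hcop⟩ := mem_coprimeFactorizations.1 hab
    have hprod : e * a * (e * b) = e * e * (a * b) := by ring
    have hgcd : (e * a).gcd (e * b) = e := by rw [Nat.gcd_mul_left, hcop.gcd_eq_one, mul_one]
    exact mem_filter.2 ⟨Nat.mem_divisorsAntidiagonal.2 ⟨hprod, by positivity⟩, hgcd⟩
  · rintro ⟨a, b⟩ - ⟨a', b'⟩ - h
    simpa [he] using h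
  · rintro ⟨c, d⟩ hcd
    obtain ⟨hmem, hgcd⟩ := mem_filter.1 hcd
    obtain ⟨hmul, hne⟩ := Nat.mem_divisorsAntidiagonal.1 hmem
    obtain ⟨a, rfl⟩ : e ∣ c := hgcd ▸ Nat.gcd_dvd_left c d
    obtain ⟨b, rfl⟩ : e ∣ d := hgcd ▸ Nat.gcd_dvd_right _ d
    have hcop : a.Coprime b := by simpa [Nat.gcd_mul_left, he] using hgcd
    have hab : a * b = N :=
      Nat.eq_of_mul_eq_mul_left (Nat.pos_of_ne_zero (left_ne_zero_of_mul hne)) (by linarith)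
    exact ⟨(a, b), mem_coprimeFactorizations.2 ⟨⟨hab, right_ne_zero_of_mul hne⟩, hcop⟩, rfl⟩

theorem card_filter_lcm_eq_divisorsAntidiagonal {m v : ℕ} (hm : m ≠ 0) (hvm : v ∣ m)
    (hmv : m ∣ v ^ 2) :
    #{p ∈ m.divisorsAntidiagonal | p.1.lcm p.2 = v} = #(coprimeFactorizations (v ^ 2 / m)) := by
  obtain ⟨e, rfl⟩ := hvm
  obtain ⟨hv, he⟩ := mul_ne_zero_iff.1 hm
  obtain ⟨N, rfl⟩ : e ∣ v := Nat.dvd_of_mul_dvd_mul_left (Nat.pos_of_ne_zero hv) (sq v ▸ hmv)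
  have hquot : (e * N) ^ 2 / (e * N * e) = N :=
    Nat.div_eq_of_eq_mul_right (Nat.pos_of_ne_zero hm) (by ring)
  have hprod : e * N * e = e * e * N := by ring
  rw [hquot, hprod, ← card_filter_gcd_eq_divisorsAntidiagonal he]
  congr 1
  refine filter_congr fun p hp ↦ ?_
  have hgl : p.1.gcd p.2 * p.1.lcm p.2 = e * (e * N) := by
    rw [Nat.gcd_mul_lcm, (Nat.mem_divisorsAntidiagonal.1 hp).1, mul_assoc]
  constructor
  · intro hlcm
    exact Nat.eq_of_mul_eq_mul_right (Nat.pos_of_ne_zero hv) (hlcm ▸ hgl)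
  · intro hgcd
    rw [hgcd] at hgl
    exact Nat.eq_of_mul_eq_mul_left (Nat.pos_of_ne_zero he) hgl

theorem sum_card_coprimeFactorizations (m : ℕ) :
    ∑ v ∈ m.divisors with m ∣ v ^ 2, #(coprimeFactorizations (v ^ 2 / m)) = #m.divisors := by
  have hlcm : ∀ p ∈ m.divisorsAntidiagonal,
      p.1.lcm p.2 ∈ ({v ∈ m.divisors | m ∣ v ^ 2} : Finset ℕ) := by
    rintro ⟨c, d⟩ hcd
    obtain ⟨rfl, hm⟩ := Nat.mem_divisorsAntidiagonal.1 hcd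
    rw [mem_filter, Nat.mem_divisors, sq]
    exact ⟨⟨Nat.lcm_dvd_mul c d, hm⟩, mul_dvd_mul (Nat.dvd_lcm_left c d) (Nat.dvd_lcm_right c d)⟩
  have hcard : #m.divisors = #m.divisorsAntidiagonal := by
    rw [← Nat.map_div_right_divisors, card_map]
  rw [hcard, card_eq_sum_card_fiberwise hlcm]
  refine sum_congr rfl fun v hv ↦ ?_
  obtain ⟨hv, hmv⟩ := mem_filter.1 hv
  obtain ⟨hvm, hm⟩ := Nat.mem_divisors.1 hv
  exact (card_filter_lcm_eq_divisorsAntidiagonal hm hvm hmv).symm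

theorem exists_lt_mul_dvd_and_dvd_succ {a b : ℕ} (hab : a.Coprime b) (ha : a ≠ 0) (hb : b ≠ 0) :
    ∃ x < a * b, a ∣ x ∧ b ∣ x + 1 := by
  obtain ⟨b, rfl⟩ := Nat.exists_eq_succ_of_ne_zero hb
  let x := Nat.chineseRemainder hab 0 b
  refine ⟨x, Nat.chineseRemainder_lt_mul hab 0 b ha hb, ?_, ?_⟩
  · exact Nat.modEq_zero_iff_dvd.1 x.2.1
  · exact ((x.2.2.add_right 1).dvd_iff dvd_rfl).2 dvd_rfl

theorem modEq_mul_of_dvd_of_dvd_succ {a b x y : ℕ} (hab : a.Coprime b) (hax : a ∣ x)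
    (hbx : b ∣ x + 1) (hay : a ∣ y) (hby : b ∣ y + 1) : x ≡ y [MOD a * b] := by
  rw [← Nat.modEq_and_modEq_iff_modEq_mul hab]
  constructor
  · exact hax.modEq_zero_nat.trans hay.modEq_zero_nat.symm
  · exact (hbx.modEq_zero_nat.trans hby.modEq_zero_nat.symm).add_right_cancel' 1

theorem gcd_mem_coprimeFactorizations {N x y : ℕ} (hN : N ≠ 0) (hxy : x.Coprime y)
    (h : N ∣ x * y) : (N.gcd x, N.gcd y) ∈ coprimeFactorizations N := by
  refine mem_coprimeFactorizations.2 ⟨⟨?_, hN⟩, ?_⟩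
  · exact (Nat.gcd_mul_gcd_eq_iff_dvd_mul_of_coprime hxy).2 h
  · exact hxy.of_dvd (Nat.gcd_dvd_right N x) (Nat.gcd_dvd_right N y)

theorem card_filter_dvd_mul_succ (N : ℕ) :
    #{x ∈ range N | N ∣ x * (x + 1)} = #(coprimeFactorizations N) := by
  have hsucc (x : ℕ) : x.Coprime (x + 1) := by simp
  refine card_nbij (fun x ↦ (N.gcd x, N.gcd (x + 1))) ?_ ?_ ?_
  · intro x hx
    obtain ⟨hxN, hdvd⟩ := mem_filter.1 hx
    exact gcd_mem_coprimeFactorizations (Nat.ne_zero_of_lt (mem_range.1 hxN)) (hsucc x) hdvd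
  · intro x hx y hy hxy
    obtain ⟨hxN, hdvd⟩ := mem_filter.1 hx
    obtain ⟨hyN, -⟩ := mem_filter.1 hy
    rw [mem_range] at hxN hyN
    obtain ⟨hgcd, hgcd'⟩ := Prod.mk.inj hxy
    obtain ⟨⟨hmul, -⟩, hcop⟩ := mem_coprimeFactorizations.1
      (gcd_mem_coprimeFactorizations (Nat.ne_zero_of_lt hxN) (hsucc x) hdvd)
    have hmod : x ≡ y [MOD N.gcd x * N.gcd (x + 1)] :=
      modEq_mul_of_dvd_of_dvd_succ hcop (Nat.gcd_dvd_right _ _) (Nat.gcd_dvd_right _ _)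
        (hgcd ▸ Nat.gcd_dvd_right _ _) (hgcd' ▸ Nat.gcd_dvd_right _ _)
    exact (hmul ▸ hmod).eq_of_lt_of_lt hxN hyN
  · rintro ⟨a, b⟩ hab
    obtain ⟨⟨rfl, hN⟩, hcop⟩ := mem_coprimeFactorizations.1 hab
    obtain ⟨ha, hb⟩ := mul_ne_zero_iff.1 hN
    obtain ⟨x, hxlt, hax, hbx⟩ := exists_lt_mul_dvd_and_dvd_succ hcop ha hb
    refine ⟨x, mem_filter.2 ⟨mem_range.2 hxlt, mul_dvd_mul hax hbx⟩, Prod.ext ?_ ?_⟩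
    · change (a * b).gcd x = a
      rw [mul_comm, Nat.gcd_mul_of_coprime_of_dvd ((hsucc x).symm.of_dvd_left hbx) hax]
    · exact Nat.gcd_mul_of_coprime_of_dvd ((hsucc x).of_dvd_left hax) hbx

theorem card_filter_range_two_mul_dvd_mul_succ (N : ℕ) :
    #{x ∈ range (2 * N) | N ∣ x * (x + 1)} = 2 * #(coprimeFactorizations N) := by
  have hperiodic (x : ℕ) : N ∣ (N + x) * (N + x + 1) ↔ N ∣ x * (x + 1) := by
    rw [show (N + x) * (N + x + 1) = N * (N + 2 * x + 1) + x * (x + 1) by ring,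
      Nat.dvd_add_right (Nat.dvd_mul_right N _)]
  rw [← Nat.count_eq_card_filter_range, two_mul, Nat.count_add]
  simp only [hperiodic]
  rw [← two_mul, Nat.count_eq_card_filter_range, card_filter_dvd_mul_succ]

theorem two_mul_add_one_sq_sub_one (x : ℕ) : (2 * x + 1) ^ 2 - 1 = 2 * (2 * (x * (x + 1))) := by
  rw [show (2 * x + 1) ^ 2 = 2 * (2 * (x * (x + 1))) + 1 by ring, Nat.add_sub_cancel]

theorem two_mul_dvd_sq_sub_one_iff {N x : ℕ} (hN : Odd N) :
    2 * N ∣ (2 * x + 1) ^ 2 - 1 ↔ N ∣ x * (x + 1) := by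
  rw [two_mul_add_one_sq_sub_one, Nat.mul_dvd_mul_iff_left two_pos,
    hN.coprime_two_right.dvd_mul_left]

theorem odd_of_even_dvd_sq_sub_one {M z : ℕ} (hM : Even M) (hz : z ≠ 0) (h : M ∣ z ^ 2 - 1) :
    Odd z := by
  have hodd : Odd (z ^ 2 - 1 + 1) := (hM.trans_dvd h).add_one
  rw [Nat.sub_add_cancel (Nat.one_le_pow _ _ (Nat.pos_of_ne_zero hz))] at hodd
  exact (Nat.odd_pow_iff two_ne_zero).1 hodd

theorem card_filter_two_mul_dvd_sq_sub_one {N : ℕ} (hN : Odd N) :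
    #{z ∈ Icc 1 (4 * N) | 2 * N ∣ z ^ 2 - 1} = 2 * #(coprimeFactorizations N) := by
  rw [← card_filter_range_two_mul_dvd_mul_succ]
  symm
  refine card_nbij (fun x ↦ 2 * x + 1) ?_ ?_ ?_
  · intro x hx
    obtain ⟨hxN, hdvd⟩ := mem_filter.1 hx
    rw [mem_range] at hxN
    exact mem_filter.2 ⟨mem_Icc.2 (by lia), (two_mul_dvd_sq_sub_one_iff hN).2 hdvd⟩
  · intro x _ y _ hxy
    simpa using hxy
  · intro z hz
    obtain ⟨hzN, hdvd⟩ := mem_filter.1 hz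
    rw [mem_Icc] at hzN
    obtain ⟨x, rfl⟩ := odd_of_even_dvd_sq_sub_one (even_two_mul N) (by lia) hdvd
    exact ⟨x, mem_filter.2 ⟨mem_range.2 (by lia), (two_mul_dvd_sq_sub_one_iff hN).1 hdvd⟩, rfl⟩

/-- The values of `v` that occur in the parameters `(v, z, n)` of the physical invariants
`M^{4,3}[v,z,n]` at height `K = k + 2`. -/
def firstParameters (K : ℕ) : Finset ℕ :=
  {v ∈ Icc 1 (K / 2) | 2 * v ∣ K ∧ K ∣ 2 * v ^ 2}

/-- The triples `(v, z, n)` labelling the physical invariants `M^{4,3}[v,z,n]` at height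
`K = k + 2`, arranged as a dependent sum over `v` because the ranges of `z` and `n` are independent
of each other once `v` is chosen. -/
def invariantTriples (K : ℕ) : Finset (ℕ × ℕ × ℕ) :=
  ((firstParameters K).sigma fun v ↦
    {z ∈ Icc 1 (8 * v ^ 2 / K) | 4 * v ^ 2 / K ∣ z ^ 2 - 1} ×ˢ range 2).map
      (Equiv.sigmaEquivProd ℕ (ℕ × ℕ)).toEmbedding

theorem mem_invariantTriples {K : ℕ} {t : ℕ × ℕ × ℕ} :
    t ∈ invariantTriples K ↔
      1 ≤ t.1 ∧ t.1 ≤ K / 2 ∧ 2 * t.1 ∣ K ∧ K ∣ 2 * t.1 ^ 2 ∧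
        1 ≤ t.2.1 ∧ t.2.1 ≤ 8 * t.1 ^ 2 / K ∧ 4 * t.1 ^ 2 / K ∣ t.2.1 ^ 2 - 1 ∧ t.2.2 ≤ 1 := by
  simp only [invariantTriples, firstParameters, mem_map_equiv, mem_sigma, mem_product, mem_filter,
    mem_Icc, mem_range, Equiv.sigmaEquivProd_symm_apply, Nat.lt_succ_iff, and_assoc]

theorem card_invariantTriples_eq_sum (K : ℕ) :
    #(invariantTriples K) =
      ∑ v ∈ firstParameters K, #{z ∈ Icc 1 (8 * v ^ 2 / K) | 4 * v ^ 2 / K ∣ z ^ 2 - 1} * 2 := by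
  simp only [invariantTriples, card_map, card_sigma, card_product, card_range]

theorem firstParameters_two_mul {m : ℕ} (hm : m ≠ 0) :
    firstParameters (2 * m) = {v ∈ m.divisors | m ∣ v ^ 2} := by
  ext v
  have hbounds : v ∣ m → 1 ≤ v ∧ v ≤ m := fun hv ↦
    ⟨Nat.pos_of_dvd_of_pos hv (Nat.pos_of_ne_zero hm), Nat.le_of_dvd (Nat.pos_of_ne_zero hm) hv⟩
  simp only [firstParameters, mem_filter, mem_Icc, Nat.mem_divisors,
    Nat.mul_dvd_mul_iff_left two_pos, Nat.mul_div_cancel_left m two_pos]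
  tauto

theorem card_filter_div_two_mul_dvd_sq_sub_one {m v : ℕ} (hm : Odd m) (hvm : v ∣ m)
    (hmv : m ∣ v ^ 2) :
    #{z ∈ Icc 1 (8 * v ^ 2 / (2 * m)) | 4 * v ^ 2 / (2 * m) ∣ z ^ 2 - 1} =
      2 * #(coprimeFactorizations (v ^ 2 / m)) := by
  have hodd : Odd (v ^ 2 / m) := (hm.of_dvd_nat hvm).pow.of_dvd_nat (Nat.div_dvd_of_dvd hmv)
  rw [Nat.mul_div_mul_comm (by norm_num) hmv, Nat.mul_div_mul_comm (by norm_num) hmv]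
  exact card_filter_two_mul_dvd_sq_sub_one hodd

theorem card_invariantTriples_two_mul {m : ℕ} (hm : Odd m) :
    #(invariantTriples (2 * m)) = 4 * #m.divisors := by
  rw [card_invariantTriples_eq_sum, firstParameters_two_mul hm.pos.ne',
    ← sum_card_coprimeFactorizations, mul_sum]
  refine sum_congr rfl fun v hv ↦ ?_
  obtain ⟨hv, hmv⟩ := mem_filter.1 hv
  rw [card_filter_div_two_mul_dvd_sq_sub_one hm (Nat.dvd_of_mem_divisors hv) hmv]
  ring

theorem card_divisors_two_mul {m : ℕ} (hm : Odd m) : #(2 * m).divisors = 2 * #m.divisors := by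
  rw [hm.coprime_two_left.card_divisors_mul, Nat.prime_two.divisors, card_pair (by decide)]

/-- for `4 ∣ k`, the number of triples `(v,z,n)` parametrising the
physical invariants `M^{4,3}[v,z,n]` equals `2·d(k̄)`. -/
theorem count_M43 (k : ℕ) (hk : 4 ∣ k) (hk0 : 0 < k) :
    Nat.card {t : ℕ × ℕ × ℕ //
        1 ≤ t.1 ∧ t.1 ≤ (k + 2) / 2 ∧ 2 * t.1 ∣ (k + 2) ∧ (k + 2) ∣ 2 * t.1 ^ 2 ∧
        1 ≤ t.2.1 ∧ t.2.1 ≤ 8 * t.1 ^ 2 / (k + 2) ∧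
        (4 * t.1 ^ 2 / (k + 2)) ∣ (t.2.1 ^ 2 - 1) ∧
        t.2.2 ≤ 1}
      = 2 * (k + 2).divisors.card := by
  obtain ⟨j, rfl⟩ := hk
  have hodd : Odd (2 * j + 1) := odd_two_mul_add_one j
  have hkbar : 4 * j + 2 = 2 * (2 * j + 1) := by ring
  rw [Nat.subtype_card (invariantTriples (4 * j + 2)) fun _ ↦ mem_invariantTriples, hkbar,
    card_invariantTriples_two_mul hodd, card_divisors_two_mul hodd]
  ring
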